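/- There exists a widely digitally delicate prime in base 5; that is, there exists a prime p such that for every natural number i and every digit d ∈ {0, 1, ..., 4} with d ≠ digit_i(p), where digit_i(p) denotes the i-th base-5 digit of p (counting from the least significant digit, i = 0, with digit_i(p) = 0 for all i at or beyond the number of base-5 digits of p, i.e., leading zeros), the number p + (d − digit_i(p))·5^i obtained by replacing the i-th base-5 digit of p (including leading zeros) with d is not prime. -/

import Mathlib

/-- The i-th base-5 digit (from the least significant, starting at i = 0) of n;
for i at or beyond the number of base-5 digits of n this is 0 (a leading zero). -/
def digit (n i : ℕ) : ℕ := n / 5 ^ i % 5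

/-!
Raising the `i`-th digit of `p` by `k` gives `p + k * 5 ^ i` with `1 ≤ k ≤ 4`. If `5 ^ m ≡ 1` modulo
`q` and `q ∣ p + k * 5 ^ r`, then `q ∣ p + k * 5 ^ i` for every `i ≡ r` modulo `m`. So it suffices
to fix the residue of `p` modulo finitely many primes `q` in such a way that, for each `k`, the
resulting classes `r` modulo `m` cover all natural numbers. For odd `k` the prime `q = 2` alone
does this. Lowering a digit concerns only the finitely many nonzero digits of `p`, and a search
through the residue class prescribed by the covering systems finds a prime `p` for which all the
lowered numbers have a small divisor. The primality of `p` is proved by Lucas' test, as `p - 1` has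
only small prime factors.
-/

section Covering

variable {b p k q m r i : ℕ}

theorem pow_modEq_pow_of_modEq (hperiod : b ^ m ≡ 1 [MOD q]) (hi : i ≡ r [MOD m]) :
    b ^ i ≡ b ^ r [MOD q] := by
  rw [← ZMod.natCast_eq_natCast_iff] at hperiod ⊢
  push_cast at hperiod ⊢
  rw [pow_eq_pow_mod i hperiod, pow_eq_pow_mod r hperiod, hi]

/-- A class of a covering system for the numbers `p + k * b ^ i`: the exponents `i` congruent to
`r` modulo `m` are those for which `q` is used as a proper divisor. The conditions are decidable,
and only refer to the representative `r`. -/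
def IsCoveringClass (b p k q m r : ℕ) : Prop :=
  1 < q ∧ q < p ∧ b ^ m ≡ 1 [MOD q] ∧ q ∣ p + k * b ^ r

instance : Decidable (IsCoveringClass b p k q m r) :=
  inferInstanceAs (Decidable (_ ∧ _))

theorem IsCoveringClass.not_prime (h : IsCoveringClass b p k q m r) (hi : i ≡ r [MOD m]) :
    ¬ (p + k * b ^ i).Prime := by
  obtain ⟨hq, hqp, hperiod, hr⟩ := h
  have hmod : p + k * b ^ i ≡ p + k * b ^ r [MOD q] :=
    ((pow_modEq_pow_of_modEq hperiod hi).mul_left k).add_left p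
  have hdvd : q ∣ p + k * b ^ i := (hmod.dvd_iff dvd_rfl).2 hr
  exact Nat.not_prime_of_dvd_of_lt hdvd hq (Nat.lt_add_right _ hqp)

end Covering

section Digit

variable {n i d : ℕ}

theorem digit_mul_pow_le (n i : ℕ) : digit n i * 5 ^ i ≤ n :=
  (Nat.mul_le_mul_right _ (Nat.mod_le _ _)).trans (Nat.div_mul_le_self _ _)

theorem digit_eq_zero_of_lt_pow (h : n < 5 ^ i) : digit n i = 0 := by
  rw [digit, Nat.div_eq_of_lt h, Nat.zero_mod]

theorem sub_digit_mul_pow_add_of_digit_le (h : digit n i ≤ d) :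
    n - digit n i * 5 ^ i + d * 5 ^ i = n + (d - digit n i) * 5 ^ i := by
  have hle := digit_mul_pow_le n i
  have hmul : digit n i * 5 ^ i ≤ d * 5 ^ i := Nat.mul_le_mul_right _ h
  rw [Nat.sub_mul]
  omega

theorem sub_digit_mul_pow_add_of_le_digit (h : d ≤ digit n i) :
    n - digit n i * 5 ^ i + d * 5 ^ i = n - (digit n i - d) * 5 ^ i := by
  have hle := digit_mul_pow_le n i
  have hmul : d * 5 ^ i ≤ digit n i * 5 ^ i := Nat.mul_le_mul_right _ h
  rw [Nat.sub_mul]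
  omega

end Digit

theorem lucas_primality_of_list_prod {p : ℕ} {l : List ℕ} (a : ZMod p)
    (hl : ∀ q ∈ l, q.Prime) (hprod : l.prod = p - 1) (ha : a ^ (p - 1) = 1)
    (hd : ∀ q ∈ l, a ^ ((p - 1) / q) ≠ 1) : p.Prime := by
  refine lucas_primality p a ha fun q hq hdvd => hd q ?_
  exact mem_list_primes_of_dvd_prod hq.prime (fun r hr => (hl r hr).prime) (hprod ▸ hdvd)

/-- The widely digitally delicate prime exhibited here. It was found by a computer search among the
solutions of the congruences modulo 2, 3, 7, 13, 17, 19, 31, 313, 829, 5167 and 11489 that the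
covering systems below prescribe. -/
def delicatePrime : ℕ := 20754524420888222492666011

theorem prime_delicatePrime : delicatePrime.Prime := by
  unfold delicatePrime
  apply lucas_primality_of_list_prod 2
    (l := [2, 3, 3, 3, 3, 5, 37, 1399, 37363, 438733, 30197173])
  · norm_num
  · norm_num
  · norm_num1
    reduce_mod_char
  · simp only [List.forall_mem_cons]
    norm_num1
    reduce_mod_char
    decide

theorem not_prime_delicatePrime_add_two_mul_pow (i : ℕ) :
    ¬ (delicatePrime + 2 * 5 ^ i).Prime := by
  obtain h | h | h | h | h : i ≡ 0 [MOD 2] ∨ i ≡ 1 [MOD 4] ∨ i ≡ 3 [MOD 8] ∨ i ≡ 7 [MOD 16] ∨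
      i ≡ 15 [MOD 16] := by
    unfold Nat.ModEq
    omega
  · exact (by decide : IsCoveringClass 5 delicatePrime 2 3 2 0).not_prime h
  · exact (by decide : IsCoveringClass 5 delicatePrime 2 13 4 1).not_prime h
  · exact (by decide : IsCoveringClass 5 delicatePrime 2 313 8 3).not_prime h
  · exact (by decide : IsCoveringClass 5 delicatePrime 2 17 16 7).not_prime h
  · exact (by decide : IsCoveringClass 5 delicatePrime 2 11489 16 15).not_prime h

theorem not_prime_delicatePrime_add_four_mul_pow (i : ℕ) :
    ¬ (delicatePrime + 4 * 5 ^ i).Prime := by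
  obtain h | h | h | h | h | h : i ≡ 1 [MOD 2] ∨ i ≡ 0 [MOD 3] ∨ i ≡ 4 [MOD 6] ∨ i ≡ 2 [MOD 9] ∨
      i ≡ 5 [MOD 9] ∨ i ≡ 8 [MOD 18] := by
    unfold Nat.ModEq
    have hsplit : i % 6 = 2 → i % 9 = 2 ∨ i % 9 = 5 ∨ i % 18 = 8 := by omega
    omega
  · exact (by decide : IsCoveringClass 5 delicatePrime 4 3 2 1).not_prime h
  · exact (by decide : IsCoveringClass 5 delicatePrime 4 31 3 0).not_prime h
  · exact (by decide : IsCoveringClass 5 delicatePrime 4 7 6 4).not_prime h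
  · exact (by decide : IsCoveringClass 5 delicatePrime 4 19 9 2).not_prime h
  · exact (by decide : IsCoveringClass 5 delicatePrime 4 829 9 5).not_prime h
  · exact (by decide : IsCoveringClass 5 delicatePrime 4 5167 18 8).not_prime h

theorem not_prime_delicatePrime_add_mul_pow {k : ℕ} (hk : 0 < k) (hk' : k ≤ 4) (i : ℕ) :
    ¬ (delicatePrime + k * 5 ^ i).Prime := by
  interval_cases k
  · exact (by decide : IsCoveringClass 5 delicatePrime 1 2 1 0).not_prime Nat.modEq_one
  · exact not_prime_delicatePrime_add_two_mul_pow i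
  · exact (by decide : IsCoveringClass 5 delicatePrime 3 2 1 0).not_prime Nat.modEq_one
  · exact not_prime_delicatePrime_add_four_mul_pow i

theorem exists_dvd_delicatePrime_sub_mul_pow :
    ∀ i < 37, ∀ k ≤ digit delicatePrime i, 0 < k →
      ∃ q ∈ [2, 3, 19, 23, 29, 43, 47, 61],
        q ∣ delicatePrime - k * 5 ^ i ∧ 2 ≤ q ∧ q < delicatePrime - k * 5 ^ i := by
  unfold digit
  decide +kernel

theorem not_prime_delicatePrime_sub_mul_pow {i k : ℕ} (hk : 0 < k)
    (hk' : k ≤ digit delicatePrime i) : ¬ (delicatePrime - k * 5 ^ i).Prime := by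
  have hi : i < 37 := by
    by_contra! hi
    have hlt : delicatePrime < 5 ^ i :=
      (by decide : delicatePrime < 5 ^ 37).trans_le (Nat.pow_le_pow_right (by decide) hi)
    exact (hk.trans_le hk').ne' (digit_eq_zero_of_lt_pow hlt)
  obtain ⟨q, -, hdvd, hq, hlt⟩ := exists_dvd_delicatePrime_sub_mul_pow i hi k hk' hk
  exact Nat.not_prime_of_dvd_of_lt hdvd hq hlt

/-- There exists a widely digitally delicate prime in base 5: a prime p such
that replacing any one of its base-5 digits, including any of its leading
zeros, by a different digit in {0, ..., 4} yields a number that is not prime. -/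
theorem exists_widely_digitally_delicate_base_5 :
    ∃ p : ℕ, Nat.Prime p ∧
      ∀ i : ℕ, ∀ d : ℕ, d ≤ 4 → d ≠ digit p i →
        ¬ Nat.Prime (p - digit p i * 5 ^ i + d * 5 ^ i) := by
  refine ⟨delicatePrime, prime_delicatePrime, fun i d hd hne => ?_⟩
  rcases hne.lt_or_gt with hlower | hraise
  · rw [sub_digit_mul_pow_add_of_le_digit hlower.le]
    exact not_prime_delicatePrime_sub_mul_pow (Nat.sub_pos_of_lt hlower) (Nat.sub_le _ _)
  · rw [sub_digit_mul_pow_add_of_digit_le hraise.le]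
    exact not_prime_delicatePrime_add_mul_pow (Nat.sub_pos_of_lt hraise)
      ((Nat.sub_le _ _).trans hd) i
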